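/- Let α: ℝ → (0,∞) and c: ℝ → (0,∞) be functions, let {f_x : x ∈ ℝ} be a family of probability density functions on ℝ, and let β ∈ (0,1) and a > 0. Then liminf_{|x|→∞} (α(x)·|x|^{α(x)}/c(x))·∫_{−a}^{a} (1 − (1 + sgn(x)·y/(1+|x|))^{−β}) f_x(y) dy ≥ −a·β·limsup_{|x|→∞} (α(x)/c(x))·|x|^{α(x)−1}. Consequently, if α* ∈ [0,1), β ∈ (0,1−α*) and limsup_{|x|→∞} (α(x)/c(x))·|x|^{α(x)−1} < T(α*,β)/(a₀·β) for some a₀ > 0, then liminf_{|x|→∞} (α(x)·|x|^{α(x)}/c(x))·∫_{−a}^{a} (1 − (1 + sgn(x)·y/(1+|x|))^{−β}) f_x(y) dy > −T(α*,β) for all a ∈ [a₀ specifically a = a₀], i.e. the drift condition (1.7) implies condition (1.4) of the transience theorem at a = a₀. -/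

import Mathlib

/-!
The density `f x` has mass at most one on `[-r, r]`, so it suffices to bound the factor
`1 - (1 + s) ^ (-b)`, with `s = sgn(x) y / (1 + |x|)`, from below uniformly in `|y| ≤ r`. Writing
`(1 + s)⁻¹ = 1 + (-s) / (1 + s)`, Bernoulli's inequality `(1 + t) ^ b ≤ 1 + b t` (concavity of
`t ↦ t ^ b`) and `|s| ≤ r / (1 + |x|)` give the lower bound `-b r / (1 + |x| - r)`
(`one_sub_rpow_neg_ge`). Let `G_r(x)` be the integral over `[-r, r]` times
`a x * |x| ^ a x / c x`, and `A(x) = (a x / c x) * |x| ^ (a x - 1)`. Then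
`G_r(x) ≥ -r b · A(x) · |x| / (1 + |x| - r)` for `|x| > r` (`drift_term_ge`). The last factor tends to `1`, so every
real `M > limsup A` satisfies `-r b M ≤ liminf G_r`, and letting `M` decrease to `limsup A` gives
the first claim. The drift implication follows by multiplying the hypothesis by `-a₀ b < 0`; since
`A ≥ 0`, the limsup is finite there.
-/

open MeasureTheory Filter Topology Set
open scoped ENNReal

/-- The one-step transition kernel `p(x, dy) = f_x(y - x) dy` of a stable-like chain. -/
noncomputable def stepKernel (f : ℝ → ℝ → ℝ) (x : ℝ) : Measure ℝ :=
  volume.withDensity fun y => ENNReal.ofReal (f x (y - x))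

/-- The `n`-step transition kernel `p^n(x, ·)`. -/
noncomputable def nStep (f : ℝ → ℝ → ℝ) : ℕ → ℝ → Measure ℝ
  | 0, x => Measure.dirac x
  | n + 1, x => (stepKernel f x).bind (nStep f n)

/-- `{f_x : x ∈ ℝ}` is a family of probability density functions on `ℝ`. -/
def IsDensityFamily (f : ℝ → ℝ → ℝ) : Prop :=
  ∀ x, Measurable (f x) ∧ (∀ y, 0 ≤ f x y) ∧ (∫ y, f x y) = 1

/-- Condition (C1): `x ↦ f_x(y)` is Borel measurable for every `y`. -/
def CondC1 (f : ℝ → ℝ → ℝ) : Prop := ∀ y, Measurable fun x => f x y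

/-- Condition (C2): `f_x(y) ~ c(x) |y|^{-α(x)-1}` as `|y| → ∞`, for every `x`. -/
def CondC2 (a c : ℝ → ℝ) (f : ℝ → ℝ → ℝ) : Prop :=
  ∀ x, Tendsto (fun y => f x y * |y| ^ (a x + 1) / c x) (cocompact ℝ) (nhds 1)

/-- Condition (C3) with constant `k > 0`: the convergence in (C2) is uniform in
`x ∉ [-k,k]`. -/
def CondC3 (a c : ℝ → ℝ) (f : ℝ → ℝ → ℝ) (k : ℝ) : Prop :=
  0 < k ∧ ∀ ε > (0 : ℝ), ∃ R : ℝ, ∀ y : ℝ, R ≤ |y| →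
    ∀ x ∉ Icc (-k) k, |f x y * |y| ^ (a x + 1) / c x - 1| < ε

/-- Condition (C4): `inf_{x ∈ C} c(x) > 0` for every compact `C ⊆ [-k,k]^c`. -/
def CondC4 (c : ℝ → ℝ) (k : ℝ) : Prop :=
  ∀ C : Set ℝ, IsCompact C → C ⊆ (Icc (-k) k)ᶜ → ∃ ε > (0 : ℝ), ∀ x ∈ C, ε ≤ c x

/-- Condition (C5): there is `l > 0` such that for every compact `C ⊆ [-l,l]^c` of
positive Lebesgue measure, `inf_{x ∈ [-k,k]} ∫_{C-x} f_x(y) dy > 0`. -/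
def CondC5 (f : ℝ → ℝ → ℝ) (k l : ℝ) : Prop :=
  0 < l ∧ ∀ C : Set ℝ, IsCompact C → C ⊆ (Icc (-l) l)ᶜ → 0 < volume C →
    ∃ ε > (0 : ℝ), ∀ x ∈ Icc (-k) k, ε ≤ ∫ y in C, f x (y - x)

/-- `φ`-irreducibility of the chain with jump densities `f`. -/
def IsIrreducibleWith (f : ℝ → ℝ → ℝ) (φ : Measure ℝ) : Prop :=
  ∀ x : ℝ, ∀ B : Set ℝ, MeasurableSet B → 0 < φ B → ∃ n : ℕ, 1 ≤ n ∧ 0 < nStep f n x B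

/-- The chain is recurrent: it is `φ`-irreducible for some probability measure `φ` and
`∑_n p^n(x,B) = ∞` for every `x` and every `B` with `φ(B) > 0`. -/
def IsRecurrentChain (f : ℝ → ℝ → ℝ) : Prop :=
  ∃ φ : Measure ℝ, IsProbabilityMeasure φ ∧ IsIrreducibleWith f φ ∧
    ∀ x : ℝ, ∀ B : Set ℝ, MeasurableSet B → 0 < φ B → (∑' n : ℕ, nStep f n x B) = ⊤

/-- The chain is transient: it is `φ`-irreducible for some probability measure `φ` and
there is a countable Borel cover of `ℝ` on each set of which the potential kernel is
uniformly bounded. -/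
def IsTransientChain (f : ℝ → ℝ → ℝ) : Prop :=
  (∃ φ : Measure ℝ, IsProbabilityMeasure φ ∧ IsIrreducibleWith f φ) ∧
    ∃ Bs : ℕ → Set ℝ, (∀ j, MeasurableSet (Bs j)) ∧ (⋃ j, Bs j) = univ ∧
      ∀ j, ∃ M : ℝ≥0∞, M ≠ ⊤ ∧ ∀ x : ℝ, (∑' n : ℕ, nStep f n x (Bs j)) ≤ M

/-- `C` is a small set: `p^n(x, ·) ≥ ν_n` on `C` for some `n ≥ 1` and nontrivial `ν_n`. -/
def IsSmallSet (f : ℝ → ℝ → ℝ) (C : Set ℝ) : Prop :=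
  ∃ n : ℕ, 1 ≤ n ∧ ∃ ν : Measure ℝ, ν ≠ 0 ∧
    ∀ x ∈ C, ∀ B : Set ℝ, MeasurableSet B → ν B ≤ nStep f n x B

/-- `C` is a petite set: `∑_n a(n) p^n(x, ·) ≥ ν_a` on `C` for some probability
distribution `a` on `ℕ` and nontrivial measure `ν_a`. -/
def IsPetiteSet (f : ℝ → ℝ → ℝ) (C : Set ℝ) : Prop :=
  ∃ a : ℕ → ℝ≥0∞, (∑' n, a n) = 1 ∧ ∃ ν : Measure ℝ, ν ≠ 0 ∧
    ∀ x ∈ C, ∀ B : Set ℝ, MeasurableSet B → ν B ≤ ∑' n : ℕ, a n * nStep f n x B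

/-- The digamma function `Ψ = Γ'/Γ`. -/
noncomputable def digammaFn (x : ℝ) : ℝ := deriv Real.Gamma x / Real.Gamma x

/-- The constant `R(α)` of the recurrence theorem. -/
noncomputable def Rconst (a : ℝ) : ℝ :=
  (∑' i : ℕ, 1 / ((i + 1 : ℝ) * (2 * (i + 1 : ℝ) - a))) - Real.log 2 / a -
    (1 / (2 * a)) * (digammaFn ((a + 1) / 2) - digammaFn (a / 2))

/-- The constant `T(α, β)` of the transience theorem, written via Gamma functions:
`T(α,β) = ₂F₁(-α,β,1-α;1) + β B(α+β,1-α) - α B(α+β,1-β)`. -/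
noncomputable def Tconst (a b : ℝ) : ℝ :=
  Real.Gamma (1 - a) * Real.Gamma (1 - b) / Real.Gamma (1 - a - b) +
    b * (Real.Gamma (a + b) * Real.Gamma (1 - a) / Real.Gamma (1 + b)) -
    a * (Real.Gamma (a + b) * Real.Gamma (1 - b) / Real.Gamma (1 + a))

/-- `hitProbLe f n x B = ℙ(τ_B ≤ n | X₀ = x)`, defined by first-step decomposition:
`ℙ_x(τ_B ≤ n+1) = ∫ p(x,dy) (1_B(y) + 1_{B^c}(y) ℙ_y(τ_B ≤ n))`. -/
noncomputable def hitProbLe (f : ℝ → ℝ → ℝ) : ℕ → ℝ → Set ℝ → ℝ≥0∞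
  | 0, _, _ => 0
  | n + 1, x, B =>
      ∫⁻ y, (B.indicator (fun _ => (1 : ℝ≥0∞)) y +
        Bᶜ.indicator (fun z => hitProbLe f n z B) y) ∂(stepKernel f x)

/-- `ψ` is a maximal irreducibility measure of the chain. -/
def IsMaximalIrrMeasure (f : ℝ → ℝ → ℝ) (ψ : Measure ℝ) : Prop :=
  IsProbabilityMeasure ψ ∧ IsIrreducibleWith f ψ ∧
    ∀ φ : Measure ℝ, IsProbabilityMeasure φ → IsIrreducibleWith f φ → φ ≪ ψ

/-- Harris recurrence: the chain is `ψ`-irreducible (`ψ` maximal) and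
`ℙ(τ_B < ∞ | X₀ = x) = 1` for all `x` and all `B` with `ψ(B) > 0`. -/
def IsHarrisRecurrentChain (f : ℝ → ℝ → ℝ) : Prop :=
  ∃ ψ : Measure ℝ, IsMaximalIrrMeasure f ψ ∧
    ∀ x : ℝ, ∀ B : Set ℝ, MeasurableSet B → 0 < ψ B →
      (⨆ n : ℕ, hitProbLe f n x B) = 1

/-- The concavity bound, uniform over the jumps `y` with `|y| ≤ r`. -/
lemma one_sub_rpow_neg_ge {b r x y : ℝ} (hb : b ∈ Set.Ioo (0 : ℝ) 1)
    (hx : r < 1 + |x|) (hy : y ∈ Set.Icc (-r) r) :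
    0 < 1 + Real.sign x * (y / (1 + |x|)) ∧
      -(b * r / (1 + |x| - r)) ≤ 1 - (1 + Real.sign x * (y / (1 + |x|))) ^ (-b) := by
  have hX : 0 < 1 + |x| := by positivity
  have hyr : |y| ≤ r := abs_le.2 hy
  have hr : 0 ≤ r := (abs_nonneg y).trans hyr
  set s := Real.sign x * (y / (1 + |x|)) with hs
  have habs : |s| ≤ r / (1 + |x|) := by
    have h1 : |Real.sign x| ≤ 1 := by
      rcases Real.sign_apply_eq x with h | h | h <;> simp [h]
    rw [hs, abs_mul, abs_div, abs_of_pos hX]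
    calc |Real.sign x| * (|y| / (1 + |x|)) ≤ 1 * (r / (1 + |x|)) := by gcongr
      _ = _ := one_mul _
  have hs1 : -(r / (1 + |x|)) ≤ s := (abs_le.1 habs).1
  have hlow : (1 + |x| - r) / (1 + |x|) ≤ 1 + s := by
    have : (1 + |x| - r) / (1 + |x|) = 1 - r / (1 + |x|) := by field_simp
    linarith
  have hpos0 : 0 < (1 + |x| - r) / (1 + |x|) := div_pos (by linarith) hX
  have hpos : 0 < 1 + s := hpos0.trans_le hlow
  refine ⟨hpos, ?_⟩
  have hinv : (1 + s)⁻¹ ≤ 1 + r / (1 + |x| - r) := by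
    have h2 : (1 + s)⁻¹ ≤ ((1 + |x| - r) / (1 + |x|))⁻¹ := inv_anti₀ hpos0 hlow
    have h3 : ((1 + |x| - r) / (1 + |x|))⁻¹ = 1 + r / (1 + |x| - r) := by
      have : 1 + |x| - r ≠ 0 := by linarith
      rw [inv_div, eq_comm]
      field_simp
      ring
    exact h2.trans_eq h3
  have hq : 0 ≤ r / (1 + |x| - r) := div_nonneg hr (by linarith)
  have h4 : (1 + s) ^ (-b) ≤ 1 + b * (r / (1 + |x| - r)) := by
    rw [Real.rpow_neg hpos.le, ← Real.inv_rpow hpos.le]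
    exact (Real.rpow_le_rpow (inv_nonneg.2 hpos.le) hinv hb.1.le).trans
      (rpow_one_add_le_one_add_mul_self (by linarith) hb.1.le hb.2.le)
  rw [mul_div_assoc]
  linarith

lemma integral_one_sub_rpow_ge {f : ℝ → ℝ → ℝ} (hf : IsDensityFamily f) {b r x : ℝ}
    (hb : b ∈ Set.Ioo (0 : ℝ) 1) (hr : 0 < r) (hx : r < 1 + |x|) :
    -(b * r / (1 + |x| - r)) ≤ ∫ y in Set.Icc (-r) r,
      (1 - (1 + Real.sign x * (y / (1 + |x|))) ^ (-b)) * f x y := by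
  obtain ⟨-, hnn, hone⟩ := hf x
  have hint : Integrable (f x) := by
    by_contra h
    rw [integral_undef h] at hone
    exact zero_ne_one hone
  have hcont : ContinuousOn (fun y : ℝ => 1 - (1 + Real.sign x * (y / (1 + |x|))) ^ (-b))
      (Set.Icc (-r) r) := by
    refine continuousOn_const.sub (ContinuousOn.rpow_const (by fun_prop) fun y hy => Or.inl ?_)
    exact (one_sub_rpow_neg_ge hb hx hy).1.ne'
  have hle : ∫ y in Set.Icc (-r) r, f x y ≤ 1 :=
    hone ▸ setIntegral_le_integral hint (Eventually.of_forall hnn)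
  have hq : 0 ≤ b * r / (1 + |x| - r) :=
    div_nonneg (mul_nonneg hb.1.le hr.le) (by linarith)
  calc -(b * r / (1 + |x| - r))
      ≤ -(b * r / (1 + |x| - r)) * ∫ y in Set.Icc (-r) r, f x y := by nlinarith
    _ = ∫ y in Set.Icc (-r) r, -(b * r / (1 + |x| - r)) * f x y :=
        (integral_const_mul _ _).symm
    _ ≤ _ := by
        refine setIntegral_mono_on (hint.integrableOn.const_mul _)
          (hint.integrableOn.continuousOn_mul hcont isCompact_Icc) measurableSet_Icc
          fun y hy => ?_
        exact mul_le_mul_of_nonneg_right (one_sub_rpow_neg_ge hb hx hy).2 (hnn y)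

lemma drift_term_ge {a c : ℝ → ℝ} {f : ℝ → ℝ → ℝ}
    (ha : ∀ x, 0 < a x) (hc : ∀ x, 0 < c x) (hf : IsDensityFamily f) {b r x : ℝ}
    (hb : b ∈ Set.Ioo (0 : ℝ) 1) (hr : 0 < r) (hx : r < |x|) :
    -(r * b) * ((a x / c x * |x| ^ (a x - 1)) * (|x| / (1 + |x| - r))) ≤
      a x * |x| ^ (a x) / c x * (∫ y in Set.Icc (-r) r,
        (1 - (1 + Real.sign x * (y / (1 + |x|))) ^ (-b)) * f x y) := by
  have hx0 : 0 < |x| := hr.trans hx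
  have hA : 0 ≤ a x * |x| ^ (a x) / c x :=
    div_nonneg (mul_nonneg (ha x).le (by positivity)) (hc x).le
  refine le_trans (le_of_eq ?_)
    (mul_le_mul_of_nonneg_left (integral_one_sub_rpow_ge hf hb hr (by linarith)) hA)
  have h1 : 1 + |x| - r ≠ 0 := by linarith
  have h2 := (hc x).ne'
  rw [Real.rpow_sub_one hx0.ne']
  field_simp

lemma tendsto_abs_div_one_add_abs_sub (r : ℝ) :
    Tendsto (fun x : ℝ => |x| / (1 + |x| - r)) (cocompact ℝ) (𝓝 1) := by
  have hn : Tendsto (fun x : ℝ => |x|) (cocompact ℝ) atTop := tendsto_norm_cocompact_atTop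
  have h0 : Tendsto (fun t : ℝ => t / (1 + t - r)) atTop (𝓝 1) := by
    have h1 : Tendsto (fun t : ℝ => 1 + (r - 1) * (t + (1 - r))⁻¹) atTop (𝓝 (1 + (r - 1) * 0)) :=
      ((tendsto_inv_atTop_zero.comp (tendsto_atTop_add_const_right _ _ tendsto_id)).const_mul
        _).const_add _
    rw [mul_zero, add_zero] at h1
    refine h1.congr' ?_
    filter_upwards [eventually_gt_atTop (r - 1)] with t ht
    have : 1 + t - r ≠ 0 := by linarith
    have : t + (1 - r) ≠ 0 := by linarith
    rw [show 1 + t - r = t + (1 - r) by ring]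
    field_simp
    ring
  exact h0.comp hn

/-- Every real upper bound of the limsup yields a lower bound of the liminf; the strict
inequality leaves room for the factor `|x| / (1 + |x| - r) → 1`. -/
lemma neg_mul_le_liminf {a c : ℝ → ℝ} {f : ℝ → ℝ → ℝ}
    (ha : ∀ x, 0 < a x) (hc : ∀ x, 0 < c x) (hf : IsDensityFamily f) {b r M : ℝ}
    (hb : b ∈ Set.Ioo (0 : ℝ) 1) (hr : 0 < r)
    (hM : Filter.limsup (fun x => ((a x / c x * |x| ^ (a x - 1) : ℝ) : EReal)) (cocompact ℝ)
      < (M : EReal)) :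
    ((-(r * b) * M : ℝ) : EReal) ≤ Filter.liminf (fun x => ((a x * |x| ^ (a x) / c x *
            (∫ y in Set.Icc (-r) r,
              (1 - (1 + Real.sign x * (y / (1 + |x|))) ^ (-b)) * f x y) : ℝ) : EReal))
            (cocompact ℝ) := by
  obtain ⟨L, hL, hLM⟩ := EReal.lt_iff_exists_real_btwn.1 hM
  have hLM' : L < M := EReal.coe_lt_coe_iff.1 hLM
  have hφ : ∀ᶠ x : ℝ in cocompact ℝ, L * (|x| / (1 + |x| - r)) < M := by
    have := (tendsto_abs_div_one_add_abs_sub r).const_mul L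
    rw [mul_one] at this
    exact this.eventually_lt_const hLM'
  have hn : Tendsto (fun x : ℝ => |x|) (cocompact ℝ) atTop := tendsto_norm_cocompact_atTop
  refine le_liminf_of_le (by isBoundedDefault) ?_
  filter_upwards [eventually_lt_of_limsup_lt hL, hφ, hn.eventually_gt_atTop r] with x hxL hxφ hxr
  have hxL' : a x / c x * |x| ^ (a x - 1) < L := EReal.coe_lt_coe_iff.1 hxL
  refine EReal.coe_le_coe_iff.2 ((?_ : _ ≤ _).trans (drift_term_ge ha hc hf hb hr hxr))
  have hq : 0 ≤ |x| / (1 + |x| - r) := div_nonneg (abs_nonneg x) (by linarith)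
  have hrb : 0 < r * b := mul_pos hr hb.1
  have h1 : (a x / c x * |x| ^ (a x - 1)) * (|x| / (1 + |x| - r)) ≤ M :=
    (mul_le_mul_of_nonneg_right hxL'.le hq).trans hxφ.le
  exact mul_le_mul_of_nonpos_left h1 (by linarith)

lemma limsup_coeff_nonneg {a c : ℝ → ℝ} (ha : ∀ x, 0 < a x) (hc : ∀ x, 0 < c x) :
    0 ≤ Filter.limsup (fun x => ((a x / c x * |x| ^ (a x - 1) : ℝ) : EReal)) (cocompact ℝ) := by
  refine le_limsup_of_frequently_le (Eventually.frequently (Eventually.of_forall fun x => ?_))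
    (by isBoundedDefault)
  exact EReal.coe_nonneg.2
    (mul_nonneg (div_pos (ha x) (hc x)).le (Real.rpow_nonneg (abs_nonneg x) _))

/-- The concavity bound: `liminf_{|x|→∞} G_a(x) ≥ -aβ limsup_{|x|→∞} (α(x)/c(x))|x|^{α(x)-1}`,
and consequently the drift condition (1.7) implies condition (1.4) at `a = a₀`. -/
theorem concavity_bound_and_drift_implication
    (a c : ℝ → ℝ) (f : ℝ → ℝ → ℝ)
    (ha : ∀ x, 0 < a x) (hc : ∀ x, 0 < c x)
    (hf : IsDensityFamily f) :
    (∀ b ∈ Set.Ioo (0 : ℝ) 1, ∀ r : ℝ, 0 < r →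
      ((-(r * b) : ℝ) : EReal) *
          Filter.limsup (fun x => ((a x / c x * |x| ^ (a x - 1) : ℝ) : EReal)) (cocompact ℝ)
        ≤ Filter.liminf (fun x => ((a x * |x| ^ (a x) / c x *
            (∫ y in Set.Icc (-r) r,
              (1 - (1 + Real.sign x * (y / (1 + |x|))) ^ (-b)) * f x y) : ℝ) : EReal))
            (cocompact ℝ)) ∧
    (∀ as : ℝ, as ∈ Set.Ico (0 : ℝ) 1 → ∀ b ∈ Set.Ioo (0 : ℝ) (1 - as),
      ∀ a₀ : ℝ, 0 < a₀ →
      Filter.limsup (fun x => ((a x / c x * |x| ^ (a x - 1) : ℝ) : EReal)) (cocompact ℝ)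
          < ((Tconst as b / (a₀ * b) : ℝ) : EReal) →
      ((-(Tconst as b) : ℝ) : EReal) <
        Filter.liminf (fun x => ((a x * |x| ^ (a x) / c x *
          (∫ y in Set.Icc (-a₀) a₀,
            (1 - (1 + Real.sign x * (y / (1 + |x|))) ^ (-b)) * f x y) : ℝ) : EReal))
          (cocompact ℝ)) := by
  have key : ∀ b ∈ Set.Ioo (0 : ℝ) 1, ∀ r : ℝ, 0 < r →
      ((-(r * b) : ℝ) : EReal) *
          Filter.limsup (fun x => ((a x / c x * |x| ^ (a x - 1) : ℝ) : EReal)) (cocompact ℝ)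
        ≤ Filter.liminf (fun x => ((a x * |x| ^ (a x) / c x *
            (∫ y in Set.Icc (-r) r,
              (1 - (1 + Real.sign x * (y / (1 + |x|))) ^ (-b)) * f x y) : ℝ) : EReal))
            (cocompact ℝ) := by
    intro b hb r hr
    have hrb : 0 < r * b := mul_pos hr hb.1
    have h0 := limsup_coeff_nonneg ha hc
    have hM := fun M => neg_mul_le_liminf (M := M) ha hc hf hb hr
    generalize Filter.limsup (fun x => ((a x / c x * |x| ^ (a x - 1) : ℝ) : EReal))
      (cocompact ℝ) = S at h0 hM ⊢
    induction S with
    | bot => simp at h0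
    | top => rw [EReal.coe_mul_top_of_neg (by linarith)]; exact bot_le
    | coe L =>
      rw [← EReal.coe_mul]
      by_contra! hlt
      obtain ⟨q, hq1, hq2⟩ := EReal.lt_iff_exists_real_btwn.1 hlt
      have hq2' : q < -(r * b) * L := EReal.coe_lt_coe_iff.1 hq2
      -- the bound `M` for which `-(r * b) * M = q`
      have hLM : L < -q / (r * b) := by
        rw [lt_div_iff₀ hrb]
        linarith
      have h := hM (-q / (r * b)) (EReal.coe_lt_coe_iff.2 hLM)
      rw [show -(r * b) * (-q / (r * b)) = q by
        rw [neg_mul, mul_div_cancel₀ _ hrb.ne', neg_neg]] at h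
      exact absurd hq1 (not_lt.2 h)
  refine ⟨key, fun as has b hb a₀ ha₀ hlim => ?_⟩
  have hb' : b ∈ Set.Ioo (0 : ℝ) 1 := ⟨hb.1, by linarith [hb.2, has.1]⟩
  have hrb : 0 < a₀ * b := mul_pos ha₀ hb.1
  refine lt_of_lt_of_le ?_ (key b hb' a₀ ha₀)
  have h0 := limsup_coeff_nonneg ha hc
  generalize Filter.limsup (fun x => ((a x / c x * |x| ^ (a x - 1) : ℝ) : EReal))
    (cocompact ℝ) = S at h0 hlim ⊢
  induction S with
  | bot => simp at h0
  | top => simp at hlim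
  | coe L =>
    have hL : L < Tconst as b / (a₀ * b) := EReal.coe_lt_coe_iff.1 hlim
    rw [lt_div_iff₀ hrb] at hL
    rw [← EReal.coe_mul]
    exact EReal.coe_lt_coe_iff.2 (by linarith)
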